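/- Let V = {(-2,0), (2,0), (-1,2), (1,2), (0,4), (0,4/3)} ⊆ ℝ². Then the simple lines of V are exactly the three lines L_{(-2,0),(2,0)}, L_{(-1,2),(1,2)}, and L_{(0,4),(0,4/3)}: a pair of distinct points of V spans a simple line of V if and only if the pair is one of these three pairs. -/

import Mathlib

/-- `L_{a,b}` is a simple line of `V`: `a, b` are distinct points of `V` and no
point of `V` other than `a` and `b` is collinear with `a` and `b`. -/
def SimpleLine (V : Set (ℝ × ℝ)) (a b : ℝ × ℝ) : Prop :=
  a ∈ V ∧ b ∈ V ∧ a ≠ b ∧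
    ∀ c ∈ V, Collinear ℝ ({a, b, c} : Set (ℝ × ℝ)) → c = a ∨ c = b

/-- `V` is 3-bounded: for all distinct `a, b ∈ V`, at most `3` points of `V`
are collinear with `a` and `b`. -/
def ThreeBounded (V : Set (ℝ × ℝ)) : Prop :=
  ∀ a ∈ V, ∀ b ∈ V, a ≠ b →
    ({c ∈ V | Collinear ℝ ({a, b, c} : Set (ℝ × ℝ))}).ncard ≤ 3

/-- `x 0, x 1, …, x (t-1)` (corresponding to `x_1, …, x_t`, so `1 ≤ t`) is an
orbit of the simple line `L_{a,b}` in `V`: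
(ℵ) each `x i` is a point of `V` different from `a` and `b`;
(ℶ) the points `x_1, …, x_{t-1}` are pairwise distinct;
(ℷ)/(ℸ) consecutive points are joined alternately through `b` and `a`:
`x_{2m}` is collinear with `b` and `x_{2m-1}`, and `x_{2m+1}` is collinear with
`a` and `x_{2m}` (in the `0`-based indexing below, `x (k+1)` is collinear with
`b` and `x k` for even `k`, and with `a` and `x k` for odd `k`). -/
def IsOrbit (V : Set (ℝ × ℝ)) (a b : ℝ × ℝ) (t : ℕ) (x : ℕ → ℝ × ℝ) : Prop :=
  1 ≤ t ∧
  (∀ i < t, x i ∈ V ∧ x i ≠ a ∧ x i ≠ b) ∧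
  (∀ i < t - 1, ∀ j < t - 1, i ≠ j → x i ≠ x j) ∧
  ∀ k, k + 1 < t →
    (Even k → Collinear ℝ ({b, x k, x (k + 1)} : Set (ℝ × ℝ))) ∧
    (Odd k → Collinear ℝ ({a, x k, x (k + 1)} : Set (ℝ × ℝ)))

/-- An orbit is open if `t = 1`, or `t > 1` and its first and last points differ. -/
def OpenOrbit (V : Set (ℝ × ℝ)) (a b : ℝ × ℝ) (t : ℕ) (x : ℕ → ℝ × ℝ) : Prop :=
  IsOrbit V a b t x ∧ (t = 1 ∨ (1 < t ∧ x 0 ≠ x (t - 1)))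

/-- An orbit is closed if `t > 1` and its first and last points coincide. -/
def ClosedOrbit (V : Set (ℝ × ℝ)) (a b : ℝ × ℝ) (t : ℕ) (x : ℕ → ℝ × ℝ) : Prop :=
  IsOrbit V a b t x ∧ 1 < t ∧ x 0 = x (t - 1)

/-- An orbit is maximal if it cannot be extended by one more point of `V`. -/
def MaximalOrbit (V : Set (ℝ × ℝ)) (a b : ℝ × ℝ) (t : ℕ) (x : ℕ → ℝ × ℝ) : Prop :=
  IsOrbit V a b t x ∧ ¬ ∃ y ∈ V, IsOrbit V a b (t + 1) (Function.update x t y)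

/-- Collinearity of three points of the plane as a vanishing determinant. -/
theorem collinear_iff_cross (a b c : ℝ × ℝ) (hab : a ≠ b) :
    Collinear ℝ ({a, b, c} : Set (ℝ × ℝ)) ↔
      (b.1 - a.1) * (c.2 - a.2) = (b.2 - a.2) * (c.1 - a.1) := by
  rw [collinear_iff_of_mem (p₀ := a) (by simp)]
  constructor
  · rintro ⟨v, hv⟩
    obtain ⟨r, hr⟩ := hv b (by simp)
    obtain ⟨s, hs⟩ := hv c (by simp)
    rw [hr, hs]
    simp
    ring
  · intro h
    refine ⟨b - a, ?_⟩
    intro p hp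
    simp only [Set.mem_insert_iff, Set.mem_singleton_iff] at hp
    rcases hp with rfl | rfl | rfl
    · exact ⟨0, by simp⟩
    · exact ⟨1, by simp⟩
    · by_cases h1 : b.1 - a.1 = 0
      · have h2 : b.2 - a.2 ≠ 0 := by
          intro h2
          exact hab (Prod.ext (by linarith) (by linarith))
        refine ⟨(p.2 - a.2) / (b.2 - a.2), Prod.ext ?_ ?_⟩
        · simp
          field_simp
          linarith
        · simp
          field_simp
          ring
      · refine ⟨(p.1 - a.1) / (b.1 - a.1), Prod.ext ?_ ?_⟩
        · simp
          field_simp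
          ring
        · simp
          field_simp
          linarith

/-- In the set `V = {(-2,0), (2,0), (-1,2), (1,2), (0,4),
(0,4/3)}` there are exactly three simple lines: `L_{(-2,0),(2,0)}`,
`L_{(-1,2),(1,2)}` and `L_{(0,4),(0,4/3)}`. -/
theorem six_points_simple_lines :
    let V : Set (ℝ × ℝ) := {(-2, 0), (2, 0), (-1, 2), (1, 2), (0, 4), (0, 4/3)}
    ∀ a ∈ V, ∀ b ∈ V, a ≠ b →
      (SimpleLine V a b ↔
        (({a, b} : Set (ℝ × ℝ)) = {(-2, 0), (2, 0)} ∨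
         ({a, b} : Set (ℝ × ℝ)) = {(-1, 2), (1, 2)} ∨
         ({a, b} : Set (ℝ × ℝ)) = {(0, 4), (0, 4/3)})) := by
  intro V a ha b hb hab
  have key : SimpleLine V a b ↔ ∀ c ∈ V,
      (b.1 - a.1) * (c.2 - a.2) = (b.2 - a.2) * (c.1 - a.1) → c = a ∨ c = b := by
    unfold SimpleLine
    simp only [collinear_iff_cross a b _ hab]
    exact ⟨fun h => h.2.2.2, fun h => ⟨ha, hb, hab, h⟩⟩
  rw [key]
  simp only [Set.pair_eq_pair_iff]
  clear key
  simp only [V, Set.mem_insert_iff, Set.mem_singleton_iff] at ha hb ⊢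
  simp only [forall_eq_or_imp, forall_eq]
  rcases ha with rfl | rfl | rfl | rfl | rfl | rfl <;>
  rcases hb with rfl | rfl | rfl | rfl | rfl | rfl <;>
  first
  | exact absurd rfl hab
  | (simp only [Prod.mk.injEq]; norm_num)
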